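/- arXiv:0802.1256 — 3 statements merged into one kernel-verified Lean document; each statement's English description precedes it below -/
import Mathlib

section
/- Let R be a commutative ring, A a Hopf algebra over R with antipode S, and h ∈ Dual_R(A) a right invariant functional, i.e., (id_A ⊗ h)∘Δ(a) = h(a)·1 for all a ∈ A. Then for all x, y ∈ A the strong invariance identity holds: S((id_A ⊗ h)(Δ(x)·(1 ⊗ y))) = (id_A ⊗ h)((1 ⊗ x)·Δ(y)); in Sweedler notation, Σ S(x_(1)) h(x_(2) y) = Σ y_(1) h(x y_(2)). -/
/-!
In Sweedler notation, right invariance applied to `x₍₂₎ y` together with multiplicativity of `Δ`,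
then coassociativity, the antipode axiom and the counit axiom give
`S(x₍₁₎) h(x₍₂₎ y) = S(x₍₁₎) x₍₂₎ y₍₁₎ h(x₍₃₎ y₍₂₎) = ε(x₍₁₎) y₍₁₎ h(x₍₂₎ y₍₂₎) = y₍₁₎ h(x y₍₂₎)`.
The middle expression is `strongInvAux h y` evaluated at the twofold comultiplication of `x`, which
coassociativity presents in two ways: `strongInvAux_lTensor_comul` evaluates one of them to the
left-hand side, `strongInvAux_assoc_rTensor_comul` the other to the right-hand side.
-/

open TensorProduct

/-- The linear map `A ⊗ A → A` induced by `a ⊗ b ↦ h(b)·a`, i.e. `id_A ⊗ h`. -/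
noncomputable def idTensorDual (R : Type*) {A : Type*} [CommRing R] [Ring A] [Algebra R A]
    (h : Module.Dual R A) : A ⊗[R] A →ₗ[R] A :=
  (TensorProduct.rid R A).toLinearMap ∘ₗ TensorProduct.map LinearMap.id h

section StrongInvariance

variable {R A : Type*} [CommRing R] [Ring A] [HopfAlgebra R A]

lemma idTensorDual_tmul (h : Module.Dual R A) (a b : A) :
    idTensorDual R h (a ⊗ₜ[R] b) = h b • a := by
  simp [idTensorDual]

lemma idTensorDual_tmul_one_mul (h : Module.Dual R A) (a : A) (t : A ⊗[R] A) :
    idTensorDual R h ((a ⊗ₜ[R] (1 : A)) * t) = a * idTensorDual R h t := by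
  induction t with
  | zero => simp
  | add s t hs ht => rw [mul_add, map_add, map_add, mul_add, hs, ht]
  | tmul c d => simp [idTensorDual_tmul]

/-- The linear map `A ⊗ (A ⊗ A) → A` given by `a ⊗ t ↦ S(a) · (id ⊗ h)(t · Δ(y))`. -/
noncomputable def strongInvAux (h : Module.Dual R A) (y : A) : A ⊗[R] (A ⊗[R] A) →ₗ[R] A :=
  LinearMap.mul' R A ∘ₗ TensorProduct.map (HopfAlgebra.antipode R)
    (idTensorDual R h ∘ₗ LinearMap.mulRight R (Coalgebra.comul (R := R) y))

lemma strongInvAux_tmul (h : Module.Dual R A) (y a : A) (t : A ⊗[R] A) :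
    strongInvAux h y (a ⊗ₜ[R] t) =
      HopfAlgebra.antipode R a * idTensorDual R h (t * Coalgebra.comul y) := by
  simp [strongInvAux]

/-- Right invariance, applied to `b * y` for each simple tensor `a ⊗ b`, collapses the last two
tensor factors. -/
lemma strongInvAux_lTensor_comul (h : Module.Dual R A)
    (hinv : ∀ a : A, idTensorDual R h (Coalgebra.comul a) = h a • (1 : A)) (y : A)
    (t : A ⊗[R] A) :
    strongInvAux h y (Coalgebra.comul.lTensor A t) =
      HopfAlgebra.antipode R (idTensorDual R h (t * ((1 : A) ⊗ₜ[R] y))) := by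
  induction t with
  | zero => simp
  | add s t hs ht => rw [map_add, map_add, add_mul, map_add, map_add, hs, ht]
  | tmul a b =>
    rw [LinearMap.lTensor_tmul, strongInvAux_tmul, ← Bialgebra.comul_mul, hinv,
      Algebra.TensorProduct.tmul_mul_tmul, idTensorDual_tmul]
    simp

lemma strongInvAux_assoc_tmul (h : Module.Dual R A) (y b : A) (u : A ⊗[R] A) :
    strongInvAux h y (TensorProduct.assoc R A A A (u ⊗ₜ[R] b)) =
      LinearMap.mul' R A ((HopfAlgebra.antipode R).rTensor A u) *
        idTensorDual R h (((1 : A) ⊗ₜ[R] b) * Coalgebra.comul y) := by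
  induction u with
  | zero => simp
  | add s t hs ht =>
    rw [TensorProduct.add_tmul, map_add, map_add, map_add, map_add, add_mul, hs, ht]
  | tmul a c =>
    have hc : c ⊗ₜ[R] b = (c ⊗ₜ[R] (1 : A)) * ((1 : A) ⊗ₜ[R] b) := by simp
    rw [TensorProduct.assoc_tmul, strongInvAux_tmul, hc, mul_assoc, idTensorDual_tmul_one_mul]
    simp [mul_assoc]

/-- The antipode axiom collapses the first two tensor factors to the counit. -/
lemma strongInvAux_assoc_rTensor_comul (h : Module.Dual R A) (y : A) (t : A ⊗[R] A) :
    strongInvAux h y (TensorProduct.assoc R A A A (Coalgebra.comul.rTensor A t)) =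
      idTensorDual R h (((1 : A) ⊗ₜ[R] TensorProduct.lid R A (Coalgebra.counit.rTensor A t)) *
        Coalgebra.comul y) := by
  induction t with
  | zero => simp
  | add s t hs ht => simp only [map_add, TensorProduct.tmul_add, add_mul, hs, ht]
  | tmul a b =>
    rw [LinearMap.rTensor_tmul, strongInvAux_assoc_tmul,
      HopfAlgebra.mul_antipode_rTensor_comul_apply, LinearMap.rTensor_tmul,
      TensorProduct.lid_tmul, TensorProduct.tmul_smul, smul_mul_assoc, map_smul, Algebra.smul_def]

end StrongInvariance

/-- Strong (right) invariance: if `h` is a right invariant functional on a Hopf algebra `A`,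
i.e. `(id_A ⊗ h)∘Δ(a) = h(a)·1` for all `a`, then for all `x, y ∈ A`,
`S((id_A ⊗ h)(Δ(x)·(1 ⊗ y))) = (id_A ⊗ h)((1 ⊗ x)·Δ(y))`; in Sweedler notation,
`Σ S(x_(1)) h(x_(2) y) = Σ y_(1) h(x y_(2))`. -/
theorem strong_right_invariance {R A : Type*} [CommRing R] [Ring A] [HopfAlgebra R A]
    (h : Module.Dual R A)
    (hinv : ∀ a : A, idTensorDual R h (Coalgebra.comul a) = h a • (1 : A)) (x y : A) :
    HopfAlgebra.antipode (R := R)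
        (idTensorDual R h ((Coalgebra.comul x) * ((1 : A) ⊗ₜ[R] y))) =
      idTensorDual R h (((1 : A) ⊗ₜ[R] x) * Coalgebra.comul y) := by
  rw [← strongInvAux_lTensor_comul h hinv, ← Coalgebra.coassoc_apply,
    strongInvAux_assoc_rTensor_comul, Coalgebra.rTensor_counit_comul, TensorProduct.lid_tmul,
    one_smul]
end

section
/- Let A be a complex (or real) Banach algebra, a ∈ A with ‖a‖ ≤ 1, and a_n = (1/n) Σ_{k=1}^{n} a^k. If r ∈ A is a cluster point of the sequence (a_n) in the weak topology σ(A, A*), then a·r = r·a = r, and consequently a_n·r = r·a_n = r for all n. -/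
/-!
Left and right multiplication by `a` are bounded operators `T` that shift the powers of `a`, so
`T a_n - a_n = (a^(n+1) - a) / n` telescopes and tends to `0` in norm because `‖a‖ ≤ 1`. For every
`f` in the dual, `f ∘ T - f` is again in the dual, so its value at the weak cluster point `r` is a
cluster point of a sequence of scalars tending to `0`, hence is `0`. As the dual separates points,
`T r = r`. Invariance under `a_n` follows by averaging the identities `a^k r = r = r a^k`.
-/

/-- `npow1 a k = a^(k+1)`, powers in a possibly non-unital ring. -/
noncomputable def npow1 {B : Type*} [NonUnitalRing B] (a : B) : ℕ → B
  | 0 => a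
  | n + 1 => a * npow1 a n

/-- The Cesàro averages `a_n = (1/n) Σ_{k=1}^{n} a^k`. -/
noncomputable def cesaro {B : Type*} [NonUnitalNormedRing B] [NormedSpace ℝ B]
    (a : B) (n : ℕ) : B :=
  (n : ℝ)⁻¹ • ∑ k ∈ Finset.range n, npow1 a k

lemma npow1_mul_self {B : Type*} [NonUnitalRing B] (a : B) (k : ℕ) :
    npow1 a k * a = npow1 a (k + 1) := by
  induction k with
  | zero => rfl
  | succ k ih => rw [npow1, mul_assoc, ih, ← npow1]

lemma norm_npow1_le_one {B : Type*} [NonUnitalNormedRing B] {a : B} (ha : ‖a‖ ≤ 1) (k : ℕ) :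
    ‖npow1 a k‖ ≤ 1 := by
  induction k with
  | zero => exact ha
  | succ k ih => exact (norm_mul_le _ _).trans (mul_le_one₀ ha (norm_nonneg _) ih)

lemma tendsto_map_cesaro_sub {B : Type*} [NonUnitalNormedRing B] [NormedSpace ℝ B]
    {a : B} (ha : ‖a‖ ≤ 1) (T : B →L[ℝ] B) (hT : ∀ k, T (npow1 a k) = npow1 a (k + 1)) :
    Filter.Tendsto (fun n => T (cesaro a n) - cesaro a n) Filter.atTop (nhds 0) := by
  have h : ∀ n, T (cesaro a n) - cesaro a n = (n : ℝ)⁻¹ • (npow1 a n - npow1 a 0) := by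
    intro n
    simp only [cesaro, map_smul, map_sum, hT]
    rw [← smul_sub, ← Finset.sum_sub_distrib, Finset.sum_range_sub]
  have hlim : Filter.Tendsto (fun n : ℕ => (n : ℝ)⁻¹ * 2) Filter.atTop (nhds 0) := by
    simpa using (tendsto_inv_atTop_nhds_zero_nat (𝕜 := ℝ)).mul_const 2
  refine squeeze_zero_norm (fun n => ?_) hlim
  rw [h, norm_smul, norm_inv, RCLike.norm_natCast]
  gcongr
  linarith [norm_sub_le (npow1 a n) (npow1 a 0), norm_npow1_le_one ha n, norm_npow1_le_one ha 0]

/-- A bounded operator that shifts the powers of `a` fixes every weak cluster point of the Cesàro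
averages; it is applied to left and to right multiplication by `a`. -/
lemma map_eq_of_weak_clusterPt {B : Type*} [NonUnitalNormedRing B] [NormedSpace ℝ B]
    {a : B} (ha : ‖a‖ ≤ 1) {r : B}
    (hr : MapClusterPt (toWeakSpace ℝ B r) Filter.atTop
      (fun n : ℕ => toWeakSpace ℝ B (cesaro a n)))
    (T : B →L[ℝ] B) (hT : ∀ k, T (npow1 a k) = npow1 a (k + 1)) : T r = r := by
  refine (SeparatingDual.eq_iff_forall_dual_eq (R := ℝ)).2 fun f => ?_
  let g : B →L[ℝ] ℝ := f.comp T - f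
  have hg : Continuous fun x : WeakSpace ℝ B => g ((toWeakSpace ℝ B).symm x) :=
    WeakBilin.eval_continuous (topDualPairing ℝ B).flip g
  have hcl : MapClusterPt (g r) Filter.atTop (fun n : ℕ => g (cesaro a n)) :=
    MapClusterPt.continuousAt_comp (x := toWeakSpace ℝ B r) hg.continuousAt hr
  have hlim : Filter.Tendsto (fun n : ℕ => g (cesaro a n)) Filter.atTop (nhds 0) := by
    simpa [g, Function.comp_def] using
      (f.continuous.tendsto 0).comp (tendsto_map_cesaro_sub ha T hT)
  have h0 : g r = 0 := by
    by_contra hne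
    exact (ClusterPt.mono hcl hlim).ne (disjoint_nhds_nhds.2 hne).eq_bot
  exact sub_eq_zero.1 h0

/-- If `r` is a cluster point of the Cesàro averages `a_n` in the weak topology `σ(B, B*)`,
then `a·r = r·a = r`, and consequently `a_n·r = r·a_n = r` for all `n ≥ 1`. -/
theorem weak_clusterPt_cesaro_invariant {B : Type*} [NonUnitalNormedRing B] [NormedSpace ℝ B]
    [IsScalarTower ℝ B B] [SMulCommClass ℝ B B] [CompleteSpace B]
    (a : B) (ha : ‖a‖ ≤ 1) (r : B)
    (hr : MapClusterPt (toWeakSpace ℝ B r) Filter.atTop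
      (fun n : ℕ => toWeakSpace ℝ B (cesaro a n))) :
    a * r = r ∧ r * a = r ∧ ∀ n : ℕ, 1 ≤ n → cesaro a n * r = r ∧ r * cesaro a n = r := by
  have hl : a * r = r :=
    map_eq_of_weak_clusterPt ha hr (ContinuousLinearMap.mul ℝ B a) fun _ => rfl
  have hrr : r * a = r :=
    map_eq_of_weak_clusterPt ha hr ((ContinuousLinearMap.mul ℝ B).flip a) (npow1_mul_self a)
  have hpl : ∀ k, npow1 a k * r = r := by
    intro k
    induction k with
    | zero => exact hl
    | succ k ih => rw [npow1, mul_assoc, ih, hl]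
  have hpr : ∀ k, r * npow1 a k = r := by
    intro k
    induction k with
    | zero => exact hrr
    | succ k ih => rw [npow1, ← mul_assoc, hrr, ih]
  refine ⟨hl, hrr, fun n hn => ?_⟩
  have hn0 : (n : ℝ) ≠ 0 := by positivity
  have hav : (n : ℝ)⁻¹ • (n • r) = r := by
    rw [← Nat.cast_smul_eq_nsmul ℝ, inv_smul_smul₀ hn0]
  constructor
  · simp [cesaro, smul_mul_assoc, Finset.sum_mul, hpl, hav]
  · simp [cesaro, mul_smul_comm, Finset.mul_sum, hpr, hav]
end

section
/- Let A be a complex (or real) Banach algebra, a ∈ A with ‖a‖ ≤ 1, and a_n = (1/n) Σ_{k=1}^{n} a^k. Any two cluster points of the sequence (a_n) in the weak topology σ(A, A*) coincide: if r and r' are both weak cluster points of (a_n), then r = r'. -/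
/-- A bounded operator is weakly continuous and the weak topology is Hausdorff, so the image of a
weak cluster point of `u` is the limit of `T ∘ u` whenever that limit exists in norm. -/
theorem eq_of_weak_mapClusterPt {E : Type*} [NormedAddCommGroup E] [NormedSpace ℝ E]
    {u : ℕ → E} {x c : E} (T : E →L[ℝ] E)
    (hx : MapClusterPt (toWeakSpace ℝ E x) Filter.atTop (fun n => toWeakSpace ℝ E (u n)))
    (hc : Filter.Tendsto (fun n => T (u n)) Filter.atTop (nhds c)) : T x = c := by
  refine (SeparatingDual.eq_iff_forall_dual_eq (R := ℝ)).2 fun f => ?_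
  have hcont : Continuous fun w : WeakSpace ℝ E => (f.comp T) ((toWeakSpace ℝ E).symm w) :=
    WeakBilin.eval_continuous (topDualPairing ℝ E).flip (f.comp T)
  have h1 : MapClusterPt (f (T x)) Filter.atTop (fun n => f (T (u n))) :=
    MapClusterPt.continuousAt_comp
      (f := fun w : WeakSpace ℝ E => (f.comp T) ((toWeakSpace ℝ E).symm w)) hcont.continuousAt hx
  have h2 := (f.continuous.tendsto c).comp hc
  by_contra hne
  exact (h1.clusterPt.mono h2).ne (disjoint_nhds_nhds.2 hne).eq_bot

section

variable {B : Type*} [NonUnitalNormedRing B]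

theorem npow1_mul_comm (a : B) (k : ℕ) : npow1 a k * a = a * npow1 a k := by
  induction k with
  | zero => rfl
  | succ k ih => rw [npow1, mul_assoc, ih]

theorem norm_npow1_le (a : B) (ha : ‖a‖ ≤ 1) (k : ℕ) : ‖npow1 a k‖ ≤ 1 := by
  induction k with
  | zero => exact ha
  | succ k ih => exact (norm_mul_le _ _).trans (mul_le_one₀ ha (norm_nonneg _) ih)

theorem npow1_mul_of_fixed {a r : B} (h : a * r = r) (k : ℕ) : npow1 a k * r = r := by
  induction k with
  | zero => exact h
  | succ k ih => rw [npow1, mul_assoc, ih, h]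

theorem mul_npow1_of_fixed {a r : B} (h : r * a = r) (k : ℕ) : r * npow1 a k = r := by
  induction k with
  | zero => exact h
  | succ k ih => rw [npow1, ← mul_assoc, h, ih]

variable [NormedSpace ℝ B]

theorem cesaro_mul_comm [IsScalarTower ℝ B B] [SMulCommClass ℝ B B]
    (a : B) (n : ℕ) : cesaro a n * a = a * cesaro a n := by
  simp only [cesaro, smul_mul_assoc, mul_smul_comm, Finset.sum_mul, Finset.mul_sum, npow1_mul_comm]

theorem cesaro_mul_of_fixed [IsScalarTower ℝ B B] {a r : B} (h : a * r = r)
    {n : ℕ} (hn : n ≠ 0) : cesaro a n * r = r := by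
  have hn' : (n : ℝ) ≠ 0 := Nat.cast_ne_zero.2 hn
  simp [cesaro, smul_mul_assoc, Finset.sum_mul, npow1_mul_of_fixed h, ← Nat.cast_smul_eq_nsmul ℝ,
    smul_smul, hn']

theorem mul_cesaro_of_fixed [SMulCommClass ℝ B B] {a r : B} (h : r * a = r)
    {n : ℕ} (hn : n ≠ 0) : r * cesaro a n = r := by
  have hn' : (n : ℝ) ≠ 0 := Nat.cast_ne_zero.2 hn
  simp [cesaro, mul_smul_comm, Finset.mul_sum, mul_npow1_of_fixed h, ← Nat.cast_smul_eq_nsmul ℝ,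
    smul_smul, hn']

theorem mul_cesaro_sub [SMulCommClass ℝ B B] (a : B) (n : ℕ) :
    a * cesaro a n - cesaro a n = (n : ℝ)⁻¹ • (npow1 a n - a) := by
  have h := Finset.sum_range_sub (npow1 a) n
  rw [Finset.sum_sub_distrib] at h
  simp only [cesaro, mul_smul_comm, Finset.mul_sum, ← smul_sub]
  exact congrArg _ h

theorem tendsto_mul_cesaro_sub [SMulCommClass ℝ B B] (a : B) (ha : ‖a‖ ≤ 1) :
    Filter.Tendsto (fun n => a * cesaro a n - cesaro a n) Filter.atTop (nhds 0) := by
  have h0 : Filter.Tendsto (fun n : ℕ => (n : ℝ)⁻¹ * 2) Filter.atTop (nhds 0) := by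
    simpa using (tendsto_inv_atTop_nhds_zero_nat (𝕜 := ℝ)).mul_const 2
  refine squeeze_zero_norm (fun n => ?_) h0
  rw [mul_cesaro_sub, norm_smul, norm_inv, Real.norm_natCast]
  gcongr
  linarith [norm_sub_le (npow1 a n) a, norm_npow1_le a ha n]

end

/-- Any two cluster points of the Cesàro averages `a_n` in the weak topology `σ(B, B*)`
coincide. -/
theorem weak_clusterPt_cesaro_unique {B : Type*} [NonUnitalNormedRing B] [NormedSpace ℝ B]
    [IsScalarTower ℝ B B] [SMulCommClass ℝ B B] [CompleteSpace B]
    (a : B) (ha : ‖a‖ ≤ 1) (r r' : B)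
    (hr : MapClusterPt (toWeakSpace ℝ B r) Filter.atTop
      (fun n : ℕ => toWeakSpace ℝ B (cesaro a n)))
    (hr' : MapClusterPt (toWeakSpace ℝ B r') Filter.atTop
      (fun n : ℕ => toWeakSpace ℝ B (cesaro a n))) :
    r = r' := by
  let L := ContinuousLinearMap.mul ℝ B
  have har : a * r = r := sub_eq_zero.1 <|
    eq_of_weak_mapClusterPt (L a - ContinuousLinearMap.id ℝ B) hr (tendsto_mul_cesaro_sub a ha)
  have hra : r' * a = r' := sub_eq_zero.1 <|
    eq_of_weak_mapClusterPt (L.flip a - ContinuousLinearMap.id ℝ B) hr' <|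
      (tendsto_mul_cesaro_sub a ha).congr fun n => by simp [L, cesaro_mul_comm]
  -- The identities for `a_n` fail at the junk value `a_0 = 0`, hence the restriction to `n ≠ 0`.
  have h1 : r' * r = r := eq_of_weak_mapClusterPt (L.flip r) hr' <|
    tendsto_const_nhds.congr' <| (Filter.eventually_ne_atTop 0).mono fun n hn =>
      (cesaro_mul_of_fixed har hn).symm
  have h2 : r' * r = r' := eq_of_weak_mapClusterPt (L r') hr <|
    tendsto_const_nhds.congr' <| (Filter.eventually_ne_atTop 0).mono fun n hn =>
      (mul_cesaro_of_fixed hra hn).symm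
  exact h1.symm.trans h2
end
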